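/- Let Λ and Γ be g-Riesz bases for H with lower frame bounds A_Λ, A_Γ and upper frame bounds B_Λ, B_Γ, let {ξ_j} be an orthonormal basis of ℓ²(⊕_i K_i), and set K := sup_j ‖U ξ_j‖. Then K √(A_Λ A_Γ) ≤ ‖M_{U,Λ,Γ}‖ ≤ √(B_Λ B_Γ) ‖U‖. -/

import Mathlib

open scoped InnerProductSpace ENNReal
open ContinuousLinearMap

/-!
The lower frame bound of an injective synthesis operator `T` is also a lower bound for `T` itself:
for `y = T* x`, Cauchy–Schwarz applied to `‖y‖² = ⟨T y, x⟩` turns `A ‖x‖² ≤ ‖T* x‖²` into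
`A ‖y‖² ≤ ‖T y‖²`, and the range of `T*` is dense. Composing with `T` on the left therefore shrinks
operator norms by at most the factor `√A`. The right factor of `T_Λ U T_Γ*` becomes a left factor
after passing to adjoints, which gives `√(A_Λ A_Γ) ‖U‖ ≤ ‖M_{U,Λ,Γ}‖`, and `sup_j ‖U ξ_j‖ ≤ ‖U‖`.
-/

theorem sqrt_mul_sqrt_le_sqrt_mul (a b : ℝ) : √a * √b ≤ √(a * b) := by
  obtain ha | ha := le_total 0 a
  · rw [Real.sqrt_mul ha]
  · rw [Real.sqrt_eq_zero_of_nonpos ha, zero_mul]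
    exact Real.sqrt_nonneg _

section OperatorNorm

variable {𝕜 E F G : Type*} [NontriviallyNormedField 𝕜] [SeminormedAddCommGroup E]
  [SeminormedAddCommGroup F] [SeminormedAddCommGroup G] [NormedSpace 𝕜 E] [NormedSpace 𝕜 F]
  [NormedSpace 𝕜 G]

theorem opNorm_le_sqrt_of_sq_norm_le {T : E →L[𝕜] F} {b : ℝ}
    (hT : ∀ x, ‖T x‖ ^ 2 ≤ b * ‖x‖ ^ 2) : ‖T‖ ≤ √b :=
  opNorm_le_bound _ (Real.sqrt_nonneg b) fun x ↦ by
    simpa [Real.sqrt_mul'] using Real.sqrt_le_sqrt (hT x)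

theorem sqrt_mul_opNorm_le_opNorm_comp {T : F →L[𝕜] G} {a : ℝ}
    (hT : ∀ y, a * ‖y‖ ^ 2 ≤ ‖T y‖ ^ 2) (U : E →L[𝕜] F) : √a * ‖U‖ ≤ ‖T.comp U‖ := by
  have hT_sqrt (y : F) : √a * ‖y‖ ≤ ‖T y‖ := by
    simpa [Real.sqrt_mul'] using Real.sqrt_le_sqrt (hT y)
  obtain ha | ha := (Real.sqrt_nonneg a).eq_or_lt
  · simp [← ha]
  · rw [← le_div_iff₀' ha]
    refine opNorm_le_bound _ (by positivity) fun x ↦ ?_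
    rw [div_mul_eq_mul_div, le_div_iff₀' ha]
    exact (hT_sqrt (U x)).trans ((T.comp U).le_opNorm x)

end OperatorNorm

section Adjoint

variable {𝕜 E F : Type*} [RCLike 𝕜] [NormedAddCommGroup E] [InnerProductSpace 𝕜 E]
  [CompleteSpace E] [NormedAddCommGroup F] [InnerProductSpace 𝕜 F] [CompleteSpace F]

theorem denseRange_adjoint_of_injective {T : E →L[𝕜] F} (hT : Function.Injective T) :
    DenseRange (adjoint T) := by
  have hclosure : (adjoint T).range.topologicalClosure = ⊤ := by
    rw [← T.orthogonal_ker, LinearMap.ker_eq_bot.2 hT, Submodule.bot_orthogonal_eq_top]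
  exact Submodule.dense_iff_topologicalClosure_eq_top.2 hclosure

theorem sq_norm_apply_le_norm_mul_norm_adjoint_apply (S : E →L[𝕜] F) (x : E) :
    ‖S x‖ ^ 2 ≤ ‖adjoint S (S x)‖ * ‖x‖ := by
  rw [apply_norm_sq_eq_inner_adjoint_left]
  exact re_inner_le_norm _ _

theorem mul_sq_norm_le_sq_norm_of_adjoint {T : E →L[𝕜] F} {a : ℝ} (ha : 0 ≤ a)
    (hT : Function.Injective T) (h : ∀ x, a * ‖x‖ ^ 2 ≤ ‖adjoint T x‖ ^ 2) (y : E) :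
    a * ‖y‖ ^ 2 ≤ ‖T y‖ ^ 2 := by
  refine (denseRange_adjoint_of_injective hT).induction_on y
    (isClosed_le (by fun_prop) (by fun_prop)) fun x ↦ ?_
  set z := adjoint T x
  have hCS : ‖z‖ ^ 2 ≤ ‖T z‖ * ‖x‖ := by
    simpa using sq_norm_apply_le_norm_mul_norm_adjoint_apply (adjoint T) x
  obtain hz0 | hz0 := (norm_nonneg z).eq_or_lt
  · simp [← hz0]
  · refine le_of_mul_le_mul_right ?_ (pow_pos hz0 2)
    calc a * ‖z‖ ^ 2 * ‖z‖ ^ 2 = a * (‖z‖ ^ 2) ^ 2 := by ring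
      _ ≤ a * (‖T z‖ * ‖x‖) ^ 2 := by gcongr
      _ = ‖T z‖ ^ 2 * (a * ‖x‖ ^ 2) := by ring
      _ ≤ ‖T z‖ ^ 2 * ‖z‖ ^ 2 := by gcongr; exact h x

end Adjoint

theorem multiplier_norm_bounds_general {𝕜 E F G H : Type*} [RCLike 𝕜]
    [NormedAddCommGroup E] [InnerProductSpace 𝕜 E] [CompleteSpace E]
    [NormedAddCommGroup F] [InnerProductSpace 𝕜 F] [CompleteSpace F]
    [NormedAddCommGroup G] [InnerProductSpace 𝕜 G] [CompleteSpace G]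
    [NormedAddCommGroup H] [InnerProductSpace 𝕜 H] [CompleteSpace H]
    {TΛ : F →L[𝕜] H} {TΓ : E →L[𝕜] G} {AΛ BΛ AΓ BΓ : ℝ}
    (hinjΛ : Function.Injective TΛ) (hinjΓ : Function.Injective TΓ)
    (hAΛ : 0 ≤ AΛ) (hAΓ : 0 ≤ AΓ)
    (hΛlow : ∀ x, AΛ * ‖x‖ ^ 2 ≤ ‖adjoint TΛ x‖ ^ 2)
    (hΛup : ∀ x, ‖adjoint TΛ x‖ ^ 2 ≤ BΛ * ‖x‖ ^ 2)
    (hΓlow : ∀ x, AΓ * ‖x‖ ^ 2 ≤ ‖adjoint TΓ x‖ ^ 2)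
    (hΓup : ∀ x, ‖adjoint TΓ x‖ ^ 2 ≤ BΓ * ‖x‖ ^ 2)
    (U : E →L[𝕜] F) :
    √(AΛ * AΓ) * ‖U‖ ≤ ‖TΛ.comp (U.comp (adjoint TΓ))‖ ∧
      ‖TΛ.comp (U.comp (adjoint TΓ))‖ ≤ √(BΛ * BΓ) * ‖U‖ := by
  constructor
  · have hΛ := mul_sq_norm_le_sq_norm_of_adjoint hAΛ hinjΛ hΛlow
    have hΓ := mul_sq_norm_le_sq_norm_of_adjoint hAΓ hinjΓ hΓlow
    calc √(AΛ * AΓ) * ‖U‖ = √AΛ * (√AΓ * ‖adjoint U‖) := by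
          rw [Real.sqrt_mul hAΛ, mul_assoc, LinearIsometryEquiv.norm_map]
      _ ≤ √AΛ * ‖TΓ.comp (adjoint U)‖ := by
          gcongr; exact sqrt_mul_opNorm_le_opNorm_comp hΓ _
      _ = √AΛ * ‖U.comp (adjoint TΓ)‖ := by
          rw [← LinearIsometryEquiv.norm_map adjoint, adjoint_comp, adjoint_adjoint]
      _ ≤ ‖TΛ.comp (U.comp (adjoint TΓ))‖ := sqrt_mul_opNorm_le_opNorm_comp hΛ _
  · have hΛ : ‖TΛ‖ ≤ √BΛ := by
      simpa only [LinearIsometryEquiv.norm_map] using opNorm_le_sqrt_of_sq_norm_le hΛup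
    have hΓ : ‖adjoint TΓ‖ ≤ √BΓ := opNorm_le_sqrt_of_sq_norm_le hΓup
    calc ‖TΛ.comp (U.comp (adjoint TΓ))‖ ≤ ‖TΛ‖ * (‖U‖ * ‖adjoint TΓ‖) := by
          grw [opNorm_comp_le, opNorm_comp_le]
      _ ≤ √BΛ * (‖U‖ * √BΓ) := by gcongr
      _ = √BΛ * √BΓ * ‖U‖ := by ring
      _ ≤ √(BΛ * BΓ) * ‖U‖ := by gcongr; exact sqrt_mul_sqrt_le_sqrt_mul BΛ BΓ

open ContinuousLinearMap

/-- For g-Riesz bases Λ, Γ with frame bounds A_Λ ≤ B_Λ, A_Γ ≤ B_Γ,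
an orthonormal basis {ξ_j} of ℓ²(⊕ K_i) and K := sup_j ‖U ξ_j‖, one has
K √(A_Λ A_Γ) ≤ ‖M_{U,Λ,Γ}‖ ≤ √(B_Λ B_Γ) ‖U‖. -/
theorem multiplier_norm_bounds
    {ι H : Type*} {K : ι → Type*} {J : Type*} [Nonempty J]
    [NormedAddCommGroup H] [InnerProductSpace ℂ H] [CompleteSpace H]
    [∀ i, NormedAddCommGroup (K i)] [∀ i, InnerProductSpace ℂ (K i)]
    [∀ i, CompleteSpace (K i)]
    (Λ Γ : ∀ i, H →L[ℂ] K i)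
    (TΛ TΓ : lp K 2 →L[ℂ] H)
    (hTΛ : ∀ x : H, ∀ i, (adjoint TΛ x) i = Λ i x)
    (hTΓ : ∀ x : H, ∀ i, (adjoint TΓ x) i = Γ i x)
    (hRieszΛ : Function.Bijective TΛ)
    (hRieszΓ : Function.Bijective TΓ)
    (AΛ BΛ AΓ BΓ : ℝ) (hAΛ : 0 < AΛ) (hAΓ : 0 < AΓ)
    (hΛlow : ∀ x : H, AΛ * ‖x‖ ^ 2 ≤ ‖adjoint TΛ x‖ ^ 2)
    (hΛup : ∀ x : H, ‖adjoint TΛ x‖ ^ 2 ≤ BΛ * ‖x‖ ^ 2)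
    (hΓlow : ∀ x : H, AΓ * ‖x‖ ^ 2 ≤ ‖adjoint TΓ x‖ ^ 2)
    (hΓup : ∀ x : H, ‖adjoint TΓ x‖ ^ 2 ≤ BΓ * ‖x‖ ^ 2)
    (ξ : HilbertBasis J ℂ (lp K 2))
    (U : lp K 2 →L[ℂ] lp K 2) :
    (⨆ j : J, ‖U (ξ j)‖) * Real.sqrt (AΛ * AΓ) ≤
        ‖TΛ.comp (U.comp (adjoint TΓ))‖ ∧
    ‖TΛ.comp (U.comp (adjoint TΓ))‖ ≤ Real.sqrt (BΛ * BΓ) * ‖U‖ := by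
  have hK : ⨆ j, ‖U (ξ j)‖ ≤ ‖U‖ := ciSup_le fun j ↦ U.unit_le_opNorm _ (ξ.orthonormal.1 j).le
  obtain ⟨hlow, hup⟩ := multiplier_norm_bounds_general hRieszΛ.injective hRieszΓ.injective
    hAΛ.le hAΓ.le hΛlow hΛup hΓlow hΓup U
  exact ⟨by grw [hK, mul_comm, hlow], hup⟩
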